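/- Let d be a distortion function, h : ℝ → ℝ strictly increasing, continuous, and surjective, and u : ℝ → ℝ increasing and continuous. Set ψ = h ∘ u ∘ h⁻¹ and ω = h⁻¹ ∘ u ∘ h (both increasing and continuous). Then T^ψ ∘ (T_d ∘ T^h) = (T_d ∘ T^h) ∘ T^u and (T_d ∘ T^h) ∘ T^ω = T^u ∘ (T_d ∘ T^h) as maps from M to M. -/

import Mathlib

/-!
For `u` increasing and continuous, the utility transform `T^u` commutes with every probability
distortion `T_d`. Indeed `T^u F x` is squeezed between the values `F c` with `u c ≤ x` and those
with `x < u c`, and by inner regularity of probability measures these bounds determine it.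
Passing to right limits, `T_d (T^u F) x` is squeezed in the same way by the values of `T_d F`, so it
equals `T^u (T_d F) x`. As `T^u ∘ T^v = T^(u ∘ v)`, both identities of the theorem are instances
of one: `h ∘ u = v ∘ h` implies `T^v ∘ (T_d ∘ T^h) = (T_d ∘ T^h) ∘ T^u`.
-/

open MeasureTheory Filter Topology Set

noncomputable section

/-- The set of cdfs of compactly supported probability distributions on ℝ:
increasing, right-continuous, equal to `0` for all sufficiently small `x` and
equal to `1` for all sufficiently large `x`. -/
def mSet : Set (ℝ → ℝ) :=
  {F | Monotone F ∧ (∀ x, ContinuousWithinAt F (Set.Ici x) x) ∧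
    (∃ a, ∀ x ≤ a, F x = 0) ∧ (∃ b, ∀ x, b ≤ x → F x = 1)}

/-- The set of cdfs of all probability distributions on ℝ: increasing,
right-continuous, with limit `0` at `-∞` and limit `1` at `+∞`. -/
def m0Set : Set (ℝ → ℝ) :=
  {F | Monotone F ∧ (∀ x, ContinuousWithinAt F (Set.Ici x) x) ∧
    Tendsto F atBot (𝓝 0) ∧ Tendsto F atTop (𝓝 1)}

/-- A utility function: increasing (non-strict) and continuous. -/
def IsUF (u : ℝ → ℝ) : Prop := Monotone u ∧ Continuous u

/-- An increasing and left-continuous function on ℝ. -/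
def IsLeftCtsIncr (u : ℝ → ℝ) : Prop :=
  Monotone u ∧ ∀ x, ContinuousWithinAt u (Set.Iic x) x

/-- A distortion function: an increasing function `d : [0,1] → [0,1]` with
`d 0 = 0` and `d 1 = 1` (values outside `[0,1]` are irrelevant). -/
def IsDF (d : ℝ → ℝ) : Prop :=
  MonotoneOn d (Set.Icc 0 1) ∧ d 0 = 0 ∧ d 1 = 1

/-- Right-continuity of a distortion function on `[0,1)`. -/
def DFRightCts (d : ℝ → ℝ) : Prop :=
  ∀ x ∈ Set.Ico (0:ℝ) 1, ContinuousWithinAt d (Set.Ioi x) x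

/-- A distortion function with moreover `d(0+) = 0` and `d(1-) = 1`. -/
def IsDFhat (d : ℝ → ℝ) : Prop :=
  IsDF d ∧ Tendsto d (𝓝[>] (0:ℝ)) (𝓝 0) ∧ Tendsto d (𝓝[<] (1:ℝ)) (𝓝 1)

/-- The probability distortion generated by `d`:  `T_d F x = (d ∘ F)(x+)`,
the right limit of `d ∘ F` at `x`. -/
noncomputable def distortT (d F : ℝ → ℝ) : ℝ → ℝ :=
  fun x => Function.rightLim (d ∘ F) x

/-- The utility transform `T^u`: it maps a cdf `F` to the cdf of the
pushforward under `u` of the probability measure with cdf `F`. -/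
noncomputable def utilityT (u F : ℝ → ℝ) : ℝ → ℝ := by
  classical
  exact
    if h : Monotone F ∧ ∀ x, ContinuousWithinAt F (Set.Ici x) x then
      fun x => ((StieltjesFunction.measure ⟨F, h.1, h.2⟩).map u (Set.Iic x)).toReal
    else F

/-- Left quantile `F_L^{-1}(p) = inf {x | F x ≥ p}`. -/
noncomputable def leftQ (F : ℝ → ℝ) (p : ℝ) : ℝ := sInf {x | p ≤ F x}

/-- Right quantile `F_R^{-1}(p) = inf {x | F x > p}`. -/
noncomputable def rightQ (F : ℝ → ℝ) (p : ℝ) : ℝ := sInf {x | p < F x}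

lemma mSet_subset_m0Set : mSet ⊆ m0Set := by
  rintro F ⟨hmono, hcont, ⟨a, ha⟩, ⟨b, hb⟩⟩
  exact ⟨hmono, hcont, tendsto_const_nhds.congr' ((eventually_le_atBot a).mono fun x hx =>
    (ha x hx).symm), tendsto_const_nhds.congr' ((eventually_ge_atTop b).mono fun x hx =>
    (hb x hx).symm)⟩

section UtilityFunctions

variable {u v h : ℝ → ℝ}

lemma IsUF.measurable (hu : IsUF u) : Measurable u := hu.2.measurable

lemma IsUF.comp (hu : IsUF u) (hv : IsUF v) : IsUF (u ∘ v) :=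
  ⟨hu.1.comp hv.1, hu.2.comp hv.2⟩

lemma isUF_invFun (hh : StrictMono h) (hhs : Function.Surjective h) :
    IsUF (Function.invFun h) :=
  let e := hh.orderIsoOfRightInverse h _ (Function.rightInverse_invFun hhs)
  ⟨e.symm.monotone, e.symm.continuous⟩

end UtilityFunctions

lemma measureReal_le_of_forall_isCompact {X : Type*} [TopologicalSpace X] [MeasurableSpace X]
    {μ : Measure X} [IsFiniteMeasure μ] [μ.InnerRegularCompactLTTop] {S : Set X} {b : ℝ}
    (hS : MeasurableSet S) (hb : 0 ≤ b)
    (h : ∀ K ⊆ S, IsCompact K → K.Nonempty → μ.real K ≤ b) : μ.real S ≤ b := by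
  refine ENNReal.toReal_le_of_le_ofReal hb ?_
  rw [hS.measure_eq_iSup_isCompact_of_ne_top (measure_ne_top μ S)]
  refine iSup₂_le fun K hKS => iSup_le fun hK => ?_
  rcases K.eq_empty_or_nonempty with rfl | hne
  · simp only [measure_empty, zero_le]
  · exact (ENNReal.le_ofReal_iff_toReal_le (measure_ne_top μ K) hb).2 (h K hKS hK hne)

section Cdf

open ProbabilityTheory (cdf cdf_eq_real cdf_le_one cdf_nonneg measure_cdf monotone_cdf)

variable {μ : Measure ℝ} [IsProbabilityMeasure μ] {u : ℝ → ℝ} {S : Set ℝ} {b c x : ℝ}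

lemma exists_cdf_eq_of_mem_m0Set {F : ℝ → ℝ} (hF : F ∈ m0Set) :
    ∃ μ : Measure ℝ, IsProbabilityMeasure μ ∧ ⇑(cdf μ) = F := by
  obtain ⟨hmono, hcont, hbot, htop⟩ := hF
  let f : StieltjesFunction ℝ := ⟨F, hmono, hcont⟩
  exact ⟨f.measure, f.isProbabilityMeasure hbot htop,
    congrArg _ (ProbabilityTheory.cdf_measure_stieltjesFunction f hbot htop)⟩

lemma cdf_mem_Icc (μ : Measure ℝ) (x : ℝ) : cdf μ x ∈ Icc (0 : ℝ) 1 :=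
  ⟨cdf_nonneg μ x, cdf_le_one μ x⟩

lemma cdf_map_apply (hu : Measurable u) (x : ℝ) :
    cdf (μ.map u) x = μ.real (u ⁻¹' Iic x) := by
  have := Measure.isProbabilityMeasure_map (μ := μ) hu.aemeasurable
  rw [cdf_eq_real, map_measureReal_apply hu measurableSet_Iic]

lemma cdf_le_cdf_map (hu : Monotone u) (hc : u c ≤ x) : cdf μ c ≤ cdf (μ.map u) x := by
  rw [cdf_map_apply hu.measurable, cdf_eq_real]
  exact measureReal_mono fun z hz => (hu hz).trans hc

lemma cdf_map_le_cdf (hu : Monotone u) (hc : x < u c) : cdf (μ.map u) x ≤ cdf μ c := by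
  rw [cdf_map_apply hu.measurable, cdf_eq_real]
  exact measureReal_mono fun z hz => (hu.reflect_lt (lt_of_le_of_lt hz hc)).le

lemma measureReal_le_of_forall_cdf_le (hS : MeasurableSet S) (hb : 0 ≤ b)
    (h : ∀ c ∈ S, cdf μ c ≤ b) : μ.real S ≤ b := by
  refine measureReal_le_of_forall_isCompact hS hb fun K hKS hK hne => ?_
  obtain ⟨c, hcK, hc⟩ := hK.exists_isGreatest hne
  calc μ.real K ≤ μ.real (Iic c) := measureReal_mono hc
    _ = cdf μ c := (cdf_eq_real μ c).symm
    _ ≤ b := h c (hKS hcK)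

lemma le_measureReal_of_forall_le_cdf (hS : IsClosed S) (hb : b ≤ 1)
    (h : ∀ c ∉ S, b ≤ cdf μ c) : b ≤ μ.real S := by
  suffices μ.real Sᶜ ≤ 1 - b by
    rw [probReal_compl_eq_one_sub hS.measurableSet] at this
    linarith
  refine measureReal_le_of_forall_isCompact hS.measurableSet.compl (sub_nonneg.2 hb)
    fun K hKS hK hne => ?_
  obtain ⟨z, hzK, hz⟩ := hK.exists_isLeast hne
  obtain ⟨c, hcz, hcS⟩ : ∃ c < z, c ∉ S :=
    (hS.isOpen_compl.eventually_mem (hKS hzK)).exists_lt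
  calc μ.real K ≤ μ.real (Iic c)ᶜ := measureReal_mono fun y hy => not_le.2 (hcz.trans_le (hz hy))
    _ = 1 - cdf μ c := by rw [probReal_compl_eq_one_sub measurableSet_Iic, cdf_eq_real]
    _ ≤ 1 - b := sub_le_sub_left (h c hcS) 1

lemma utilityT_cdf (hu : Measurable u) : utilityT u (cdf μ) = cdf (μ.map u) := by
  ext x
  rw [utilityT, dif_pos ⟨monotone_cdf μ, (cdf μ).right_continuous⟩, cdf_map_apply hu,
    ← map_measureReal_apply hu measurableSet_Iic]
  exact congrArg (fun ν : Measure ℝ => (ν.map u).real (Iic x)) (measure_cdf μ)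

lemma utilityT_utilityT {u v F : ℝ → ℝ} (hu : Measurable u) (hv : Measurable v)
    (hF : F ∈ m0Set) : utilityT u (utilityT v F) = utilityT (u ∘ v) F := by
  obtain ⟨μ, _, rfl⟩ := exists_cdf_eq_of_mem_m0Set hF
  have := Measure.isProbabilityMeasure_map (μ := μ) hv.aemeasurable
  rw [utilityT_cdf hv, utilityT_cdf hu, utilityT_cdf (hu.comp hv), Measure.map_map hu hv]

end Cdf

section Distortion

open ProbabilityTheory (cdf monotone_cdf)

variable {d F u : ℝ → ℝ} {μ ν : Measure ℝ} {c p x : ℝ}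

lemma IsDF.mem_Icc (hd : IsDF d) (hp : p ∈ Icc (0 : ℝ) 1) : d p ∈ Icc (0 : ℝ) 1 :=
  ⟨hd.2.1 ▸ hd.1 (left_mem_Icc.2 zero_le_one) hp hp.1,
    hd.2.2 ▸ hd.1 hp (right_mem_Icc.2 zero_le_one) hp.2⟩

lemma IsDF.monotone_comp_cdf (hd : IsDF d) (μ : Measure ℝ) : Monotone (d ∘ cdf μ) :=
  fun x y hxy => hd.1 (cdf_mem_Icc μ x) (cdf_mem_Icc μ y) (monotone_cdf μ hxy)

lemma IsDF.distortT_cdf_mem_Icc (hd : IsDF d) (μ : Measure ℝ) (x : ℝ) :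
    distortT d (cdf μ) x ∈ Icc (0 : ℝ) 1 :=
  ⟨(hd.mem_Icc (cdf_mem_Icc μ x)).1.trans ((hd.monotone_comp_cdf μ).le_rightLim le_rfl),
    ((hd.monotone_comp_cdf μ).rightLim_le (lt_add_one x)).trans
      (hd.mem_Icc (cdf_mem_Icc μ (x + 1))).2⟩

lemma distortT_mem_mSet (hd : IsDF d) (hF : F ∈ mSet) : distortT d F ∈ mSet := by
  have hm : Monotone (d ∘ F) := by
    obtain ⟨μ, _, rfl⟩ := exists_cdf_eq_of_mem_m0Set (mSet_subset_m0Set hF)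
    exact hd.monotone_comp_cdf μ
  obtain ⟨-, -, ⟨a, ha⟩, ⟨b, hb⟩⟩ := hF
  refine ⟨hm.rightLim, hm.stieltjesFunction.right_continuous, ⟨a - 1, fun x hx => ?_⟩,
    ⟨b, fun x hx => ?_⟩⟩
  · refine rightLim_eq_of_tendsto (tendsto_const_nhds.congr' ?_)
    filter_upwards [Ioo_mem_nhdsGT (show x < a by linarith)] with y hy
    rw [Function.comp_apply, ha y hy.2.le, hd.2.1]
  · refine rightLim_eq_of_tendsto (tendsto_const_nhds.congr' ?_)
    filter_upwards [self_mem_nhdsWithin] with y hy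
    rw [Function.comp_apply, hb y (hx.trans (le_of_lt hy)), hd.2.2]

variable [IsProbabilityMeasure μ] [IsProbabilityMeasure ν]

lemma distortT_cdf_map_le (hd : IsDF d) (hu : Monotone u) (hc : x < u c) :
    distortT d (cdf (μ.map u)) x ≤ distortT d (cdf μ) c := by
  obtain ⟨y, hxy, hyc⟩ := exists_between hc
  calc distortT d (cdf (μ.map u)) x ≤ d (cdf (μ.map u) y) :=
        (hd.monotone_comp_cdf (μ.map u)).rightLim_le hxy
    _ ≤ d (cdf μ c) := hd.1 (cdf_mem_Icc _ y) (cdf_mem_Icc μ c) (cdf_map_le_cdf hu hyc)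
    _ ≤ distortT d (cdf μ) c := (hd.monotone_comp_cdf μ).le_rightLim le_rfl

lemma le_distortT_cdf_map (hd : IsDF d) (hu : IsUF u) (hc : u c ≤ x) :
    distortT d (cdf μ) c ≤ distortT d (cdf (μ.map u)) x := by
  refine ge_of_tendsto ((hd.monotone_comp_cdf (μ.map u)).tendsto_rightLim x) ?_
  filter_upwards [self_mem_nhdsWithin] with y hxy
  -- Continuity of `u` keeps `u w` below `y` slightly beyond `c`, where `d ∘ cdf μ` dominates its
  -- right limit at `c`.
  obtain ⟨w, hcw, hwy⟩ : ∃ w > c, u w < y :=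
    ((hu.2.tendsto c).eventually_lt_const (hc.trans_lt hxy)).exists_gt
  calc distortT d (cdf μ) c ≤ d (cdf μ w) := (hd.monotone_comp_cdf μ).rightLim_le hcw
    _ ≤ d (cdf (μ.map u) y) :=
        hd.1 (cdf_mem_Icc μ w) (cdf_mem_Icc _ y) (cdf_le_cdf_map hu.1 hwy.le)

lemma distortT_cdf_map (hd : IsDF d) (hu : IsUF u) (hν : ⇑(cdf ν) = distortT d (cdf μ)) :
    distortT d (cdf (μ.map u)) = cdf (ν.map u) := by
  ext x
  have hbounds := hd.distortT_cdf_mem_Icc (μ.map u) x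
  rw [cdf_map_apply hu.measurable]
  refine le_antisymm ?_ ?_
  · refine le_measureReal_of_forall_le_cdf (isClosed_Iic.preimage hu.2) hbounds.2 fun c hc => ?_
    rw [hν]
    exact distortT_cdf_map_le hd hu.1 (not_le.1 hc)
  · refine measureReal_le_of_forall_cdf_le (hu.measurable measurableSet_Iic) hbounds.1
      fun c hc => ?_
    rw [hν]
    exact le_distortT_cdf_map hd hu hc

theorem distortT_utilityT (hd : IsDF d) (hu : IsUF u) (hF : F ∈ m0Set)
    (hdF : distortT d F ∈ m0Set) : distortT d (utilityT u F) = utilityT u (distortT d F) := by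
  obtain ⟨μ, _, rfl⟩ := exists_cdf_eq_of_mem_m0Set hF
  obtain ⟨ν, _, hν⟩ := exists_cdf_eq_of_mem_m0Set hdF
  rw [utilityT_cdf hu.measurable, distortT_cdf_map hd hu hν, ← utilityT_cdf hu.measurable, hν]

end Distortion

theorem stmt19_general {d h u v F : ℝ → ℝ} (hd : IsDF d) (hh : IsUF h) (hu : IsUF u)
    (hv : Measurable v) (hsemi : Function.Semiconj h u v) (hF : F ∈ m0Set)
    (hdF : distortT d F ∈ m0Set) :
    utilityT v (distortT d (utilityT h F)) = distortT d (utilityT h (utilityT u F)) :=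
  calc utilityT v (distortT d (utilityT h F))
      = utilityT v (utilityT h (distortT d F)) := by rw [distortT_utilityT hd hh hF hdF]
    _ = utilityT (h ∘ u) (distortT d F) := by
        rw [utilityT_utilityT hv hh.measurable hdF, hsemi.comp_eq]
    _ = distortT d (utilityT (h ∘ u) F) := (distortT_utilityT hd (hh.comp hu) hF hdF).symm
    _ = distortT d (utilityT h (utilityT u F)) := by
        rw [utilityT_utilityT hh.measurable hu.measurable hF]

/-- For a distortion function `d`, a strictly increasing continuous surjective
`h`, and an increasing continuous `u`, with `ψ = h ∘ u ∘ h⁻¹` and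
`ω = h⁻¹ ∘ u ∘ h`, one has `T^ψ ∘ (T_d ∘ T^h) = (T_d ∘ T^h) ∘ T^u` and
`(T_d ∘ T^h) ∘ T^ω = T^u ∘ (T_d ∘ T^h)` as maps from `M` to `M`. -/
theorem stmt19 (d h u : ℝ → ℝ) (hd : IsDF d) (hh : StrictMono h)
    (hhc : Continuous h) (hhs : Function.Surjective h) (hu : IsUF u) :
    (∀ F ∈ mSet,
      utilityT (h ∘ u ∘ Function.invFun h) (distortT d (utilityT h F)) =
        distortT d (utilityT h (utilityT u F))) ∧
    (∀ F ∈ mSet,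
      distortT d (utilityT h (utilityT (Function.invFun h ∘ u ∘ h) F)) =
        utilityT u (distortT d (utilityT h F))) := by
  have hinv := isUF_invFun hh hhs
  have hhU : IsUF h := ⟨hh.monotone, hhc⟩
  have hψ : Function.Semiconj h u (h ∘ u ∘ Function.invFun h) := fun x =>
    congrArg (h ∘ u) (Function.leftInverse_invFun hh.injective x).symm
  have hω : Function.Semiconj h (Function.invFun h ∘ u ∘ h) u := fun x =>
    Function.rightInverse_invFun hhs (u (h x))
  exact ⟨fun F hF => stmt19_general hd hhU hu (hhU.comp (hu.comp hinv)).measurable hψ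
      (mSet_subset_m0Set hF) (mSet_subset_m0Set (distortT_mem_mSet hd hF)),
    fun F hF => (stmt19_general hd hhU (hinv.comp (hu.comp hhU)) hu.measurable hω
      (mSet_subset_m0Set hF) (mSet_subset_m0Set (distortT_mem_mSet hd hF))).symm⟩
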